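/- arXiv:quant-ph/0308088 — 2 statements merged into one kernel-verified Lean document; each statement's English description precedes it below -/
import Mathlib

section
/- Let |ψ⟩ be a unit vector in H_A ⊗ H_B and ρ^{AB} = |ψ⟩⟨ψ| the corresponding pure state. Then every extension of ρ^{AB} is of the form ρ^{AB} ⊗ ρ^E, and the squashed entanglement of ρ^{AB} equals the entropy of entanglement of |ψ⟩, i.e. E_sq(|ψ⟩⟨ψ|) = S(Tr_B |ψ⟩⟨ψ|). -/
open Matrix BigOperators Kronecker
open scoped Classical ComplexOrder

noncomputable section

/-- A (quantum) state: positive semidefinite matrix of trace 1. -/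
def IsState {n : Type*} [Fintype n] (ρ : Matrix n n ℂ) : Prop :=
  ρ.PosSemidef ∧ ρ.trace = 1

/-- Von Neumann entropy (base 2), via the eigenvalues of a Hermitian matrix. -/
def vonNeumannEntropy {n : Type*} [Fintype n] (ρ : Matrix n n ℂ) : ℝ :=
  if h : ρ.IsHermitian then ∑ i, -(h.eigenvalues i * Real.logb 2 (h.eigenvalues i)) else 0

/-- Partial trace over the second (right) factor. -/
def ptraceR {A B : Type*} [Fintype A] [Fintype B]
    (ρ : Matrix (A × B) (A × B) ℂ) : Matrix A A ℂ :=
  fun i j => ∑ b, ρ (i, b) (j, b)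

/-- Partial trace over the first (left) factor. -/
def ptraceL {A B : Type*} [Fintype A] [Fintype B]
    (ρ : Matrix (A × B) (A × B) ℂ) : Matrix B B ℂ :=
  fun i j => ∑ a, ρ (a, i) (a, j)

variable {A B E : Type*} [Fintype A] [Fintype B] [Fintype E]

/-- Marginal of a tripartite state on `A × E` (trace out `B`). -/
def margAE (ρ : Matrix (A × B × E) (A × B × E) ℂ) : Matrix (A × E) (A × E) ℂ :=
  fun x y => ∑ b, ρ (x.1, b, x.2) (y.1, b, y.2)

/-- Marginal of a tripartite state on `B × E` (trace out `A`). -/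
def margBE (ρ : Matrix (A × B × E) (A × B × E) ℂ) : Matrix (B × E) (B × E) ℂ :=
  fun x y => ∑ a, ρ (a, x.1, x.2) (a, y.1, y.2)

/-- Marginal of a tripartite state on `E` (trace out `A` and `B`). -/
def margE (ρ : Matrix (A × B × E) (A × B × E) ℂ) : Matrix E E ℂ :=
  fun x y => ∑ a, ∑ b, ρ (a, b, x) (a, b, y)

/-- Marginal of a tripartite state on `A × B` (trace out `E`). -/
def margAB (ρ : Matrix (A × B × E) (A × B × E) ℂ) : Matrix (A × B) (A × B) ℂ :=
  fun x y => ∑ e, ρ (x.1, x.2, e) (y.1, y.2, e)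

/-- Quantum conditional mutual information `I(A;B|E) = S(AE)+S(BE)-S(ABE)-S(E)`. -/
def condMutualInfo (ρ : Matrix (A × B × E) (A × B × E) ℂ) : ℝ :=
  vonNeumannEntropy (margAE ρ) + vonNeumannEntropy (margBE ρ)
    - vonNeumannEntropy ρ - vonNeumannEntropy (margE ρ)

/-- Squashed entanglement: infimum of `(1/2) I(A;B|E)` over all finite-dimensional
extensions of `ρ`. -/
def Esq {A B : Type*} [Fintype A] [Fintype B] (ρ : Matrix (A × B) (A × B) ℂ) : ℝ :=
  sInf { x : ℝ | ∃ (d : ℕ) (ρE : Matrix (A × B × Fin d) (A × B × Fin d) ℂ),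
    IsState ρE ∧ margAB ρE = ρ ∧ x = (1 / 2) * condMutualInfo ρE }

/-- Outer product `|ψ⟩⟨ψ|`. -/
def outer {n : Type*} (ψ : n → ℂ) : Matrix n n ℂ :=
  Matrix.vecMulVec ψ (star ψ)

/-- Trace norm of a Hermitian matrix: sum of the absolute values of its eigenvalues. -/
def traceNorm {n : Type*} [Fintype n] (X : Matrix n n ℂ) : ℝ :=
  if h : X.IsHermitian then ∑ i, |h.eigenvalues i| else 0

/-- Entanglement of formation: infimum of average entanglement entropy over all
finite pure-state ensembles for `ρ`. -/
def EoF {A B : Type*} [Fintype A] [Fintype B] (ρ : Matrix (A × B) (A × B) ℂ) : ℝ :=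
  sInf { x : ℝ | ∃ (n : ℕ) (p : Fin n → ℝ) (ψ : Fin n → A × B → ℂ),
    (∀ k, 0 ≤ p k) ∧ (∑ k, p k) = 1 ∧ (∀ k, ∑ i, ‖ψ k i‖ ^ 2 = 1) ∧
    (∑ k, (p k : ℂ) • outer (ψ k)) = ρ ∧
    x = ∑ k, p k * vonNeumannEntropy (ptraceR (outer (ψ k))) }

/-- The function `η` : `η(x) = -x log₂ x` for `x ≤ 1/4`, `1/2` otherwise. -/
def eta (x : ℝ) : ℝ := if x ≤ 1 / 4 then -(x * Real.logb 2 x) else 1 / 2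

/-! Let `ρ^{ABE}` extend `ρ^{AB} = |ψ⟩⟨ψ|` and let `Q = 1 - |ψ⟩⟨ψ|`. Then
`(Q ⊗ 1) ρ^{ABE} (Q ⊗ 1)` is positive semidefinite with trace `Tr (ρ^{AB} Q) = 0`, so it vanishes,
and positivity gives `ρ^{ABE} (Q ⊗ 1) = 0`. Hence `ρ^{ABE}` equals its compression by
`|ψ⟩⟨ψ| ⊗ 1`, which is a product `|ψ⟩⟨ψ| ⊗ σ`. Additivity of the entropy on products then turns
`I(A;B|E)` into `S(A) + S(B) - S(AB)`, in which `S(AB) = 0` and `S(A) = S(B)`: the marginals of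
`ψ`, read as a matrix `M`, are `M Mᴴ` and `(Mᴴ M)ᵀ`, which have the same nonzero spectrum. -/

section Matrices

variable {𝕜 m n : Type*} [RCLike 𝕜]

lemma isHermitian_kronecker {M : Matrix m m 𝕜} {N : Matrix n n 𝕜}
    (hM : M.IsHermitian) (hN : N.IsHermitian) : (M ⊗ₖ N).IsHermitian := by
  rw [IsHermitian, conjTranspose_kronecker, hM.eq, hN.eq]

open scoped MatrixOrder in
lemma posSemidef_mul_eq_zero_of_trace_eq_zero [Fintype m] [Fintype n] {ρ : Matrix n n 𝕜}
    (hρ : ρ.PosSemidef) {K : Matrix n m 𝕜} (h : (Kᴴ * ρ * K).trace = 0) : ρ * K = 0 := by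
  obtain ⟨C, rfl⟩ := CStarAlgebra.nonneg_iff_eq_star_mul_self.mp hρ.nonneg
  rw [star_eq_conjTranspose] at h ⊢
  rw [conjTranspose_mul_self_mul_eq_zero, ← trace_conjTranspose_mul_self_eq_zero_iff,
    conjTranspose_mul]
  simpa only [Matrix.mul_assoc] using h

variable [Fintype m] [DecidableEq m] [Fintype n] [DecidableEq n]

open Polynomial in
lemma charpoly_kronecker_of_isHermitian {M : Matrix m m 𝕜} {N : Matrix n n 𝕜}
    (hM : M.IsHermitian) (hN : N.IsHermitian) :
    (M ⊗ₖ N).charpoly =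
      ∏ i : m × n, (X - C ((hM.eigenvalues i.1 * hN.eigenvalues i.2 : ℝ) : 𝕜)) := by
  let U : Matrix m m 𝕜 := ↑hM.eigenvectorUnitary
  let V : Matrix n n 𝕜 := ↑hN.eigenvectorUnitary
  let D : Matrix m m 𝕜 := diagonal (RCLike.ofReal ∘ hM.eigenvalues)
  let F : Matrix n n 𝕜 := diagonal (RCLike.ofReal ∘ hN.eigenvalues)
  have hU : star U * U = 1 := Unitary.coe_star_mul_self _
  have hV : star V * V = 1 := Unitary.coe_star_mul_self _
  have hMN : M ⊗ₖ N = (U ⊗ₖ V) * ((D ⊗ₖ F) * (star U ⊗ₖ star V)) := by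
    conv_lhs => rw [hM.spectral_theorem, hN.spectral_theorem]
    simp only [Unitary.conjStarAlgAut_apply, ← mul_kronecker_mul, Matrix.mul_assoc]
    rfl
  rw [hMN, charpoly_mul_comm, Matrix.mul_assoc, ← mul_kronecker_mul, hU, hV, one_kronecker_one,
    mul_one, diagonal_kronecker_diagonal, charpoly_diagonal]
  simp

end Matrices

section Entropy

variable {m n : Type*} [Fintype m] [Fintype n]

lemma vonNeumannEntropy_eq_sum_roots_charpoly [DecidableEq n] {ρ : Matrix n n ℂ}
    (hρ : ρ.IsHermitian) :
    vonNeumannEntropy ρ =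
      (ρ.charpoly.roots.map fun z => Real.negMulLog z.re).sum / Real.log 2 := by
  rw [vonNeumannEntropy, dif_pos hρ]
  trans ∑ i, -(hρ.eigenvalues i * Real.logb 2 (hρ.eigenvalues i))
  -- `vonNeumannEntropy` takes its eigenvalues with the classical `DecidableEq n`.
  · convert rfl
  rw [hρ.roots_charpoly_eq_eigenvalues, Multiset.map_map, Finset.sum_map_val, Finset.sum_div]
  refine Finset.sum_congr rfl fun i _ => ?_
  simp [Real.negMulLog, Real.logb, mul_div_assoc, neg_div]

open Polynomial in
lemma vonNeumannEntropy_eq_of_charpoly_eq_prod {ι : Type*} [Fintype ι] [DecidableEq n]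
    {ρ : Matrix n n ℂ} (hρ : ρ.IsHermitian) {a : ι → ℝ}
    (h : ρ.charpoly = ∏ i, (X - C (a i : ℂ))) :
    vonNeumannEntropy ρ = (∑ i, Real.negMulLog (a i)) / Real.log 2 := by
  rw [vonNeumannEntropy_eq_sum_roots_charpoly hρ, h,
    roots_prod _ _ (Finset.prod_ne_zero_iff.2 fun i _ => X_sub_C_ne_zero _)]
  simp

lemma vonNeumannEntropy_transpose {ρ : Matrix n n ℂ} (hρ : ρ.IsHermitian) :
    vonNeumannEntropy ρᵀ = vonNeumannEntropy ρ := by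
  rw [vonNeumannEntropy_eq_sum_roots_charpoly hρ,
    vonNeumannEntropy_eq_sum_roots_charpoly hρ.transpose, charpoly_transpose]

lemma vonNeumannEntropy_reindex (e : m ≃ n) {ρ : Matrix m m ℂ} (hρ : ρ.IsHermitian) :
    vonNeumannEntropy (reindex e e ρ) = vonNeumannEntropy ρ := by
  rw [vonNeumannEntropy_eq_sum_roots_charpoly hρ,
    vonNeumannEntropy_eq_sum_roots_charpoly (ρ := reindex e e ρ) (hρ.submatrix e.symm),
    charpoly_reindex]

-- The characteristic polynomials differ by a power of `X`, and the eigenvalue `0` has no entropy.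
lemma vonNeumannEntropy_mul_comm {M : Matrix m n ℂ} {N : Matrix n m ℂ}
    (hMN : (M * N).IsHermitian) (hNM : (N * M).IsHermitian) :
    vonNeumannEntropy (M * N) = vonNeumannEntropy (N * M) := by
  have sum_roots_X_pow_mul (k : ℕ) {p : Polynomial ℂ} (hp : p.Monic) :
      ((Polynomial.X ^ k * p).roots.map fun z : ℂ => Real.negMulLog z.re).sum =
        (p.roots.map fun z : ℂ => Real.negMulLog z.re).sum := by
    rw [Polynomial.roots_mul ((Polynomial.monic_X_pow k).mul hp).ne_zero]
    simp [Multiset.map_nsmul, Multiset.sum_nsmul]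
  rw [vonNeumannEntropy_eq_sum_roots_charpoly hMN, vonNeumannEntropy_eq_sum_roots_charpoly hNM,
    ← sum_roots_X_pow_mul (Fintype.card n) (charpoly_monic _), charpoly_mul_comm',
    sum_roots_X_pow_mul _ (charpoly_monic _)]

lemma vonNeumannEntropy_kronecker {M : Matrix m m ℂ} {N : Matrix n n ℂ}
    (hM : M.IsHermitian) (hN : N.IsHermitian) :
    vonNeumannEntropy (M ⊗ₖ N) =
      N.trace.re * vonNeumannEntropy M + M.trace.re * vonNeumannEntropy N := by
  have htM : M.trace.re = ∑ i, hM.eigenvalues i := by simp [hM.trace_eq_sum_eigenvalues]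
  have htN : N.trace.re = ∑ i, hN.eigenvalues i := by simp [hN.trace_eq_sum_eigenvalues]
  rw [vonNeumannEntropy_eq_of_charpoly_eq_prod (isHermitian_kronecker hM hN)
      (a := fun i : m × n => hM.eigenvalues i.1 * hN.eigenvalues i.2)
      (by simpa using charpoly_kronecker_of_isHermitian hM hN),
    vonNeumannEntropy_eq_of_charpoly_eq_prod hM (by simpa using hM.charpoly_eq),
    vonNeumannEntropy_eq_of_charpoly_eq_prod hN (by simpa using hN.charpoly_eq), htM, htN]
  simp only [Real.negMulLog_mul, Fintype.sum_prod_type, Finset.sum_add_distrib,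
    ← Finset.sum_mul, ← Finset.mul_sum]
  ring

end Entropy

section PartialTrace

lemma ptraceL_kronecker (M : Matrix A A ℂ) (N : Matrix B B ℂ) :
    ptraceL (M ⊗ₖ N) = M.trace • N := by
  ext b b'
  simp [ptraceL, trace, ← Finset.sum_mul]

lemma trace_mul_kronecker_one (ρ : Matrix (A × B) (A × B) ℂ) (Q : Matrix A A ℂ) :
    (ρ * (Q ⊗ₖ (1 : Matrix B B ℂ))).trace = (ptraceR ρ * Q).trace := by
  simp only [trace, diag_apply, mul_apply, kroneckerMap_apply, one_apply, ptraceR,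
    Fintype.sum_prod_type, mul_ite, mul_one, mul_zero, Finset.sum_ite_eq', Finset.mem_univ, if_true,
    Finset.sum_mul]
  exact Finset.sum_congr rfl fun a _ => Finset.sum_comm

lemma mul_kronecker_one_eq_zero_of_ptraceR_mul_eq_zero {n : Type*} [Finite n]
    {ρ : Matrix (A × B) (A × B) ℂ} (hρ : ρ.PosSemidef) {Q : Matrix A n ℂ}
    (h : ptraceR ρ * Q = 0) : ρ * (Q ⊗ₖ (1 : Matrix B B ℂ)) = 0 := by
  cases nonempty_fintype n
  apply posSemidef_mul_eq_zero_of_trace_eq_zero hρ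
  rw [Matrix.mul_assoc, trace_mul_comm, Matrix.mul_assoc, conjTranspose_kronecker,
    conjTranspose_one, ← mul_kronecker_mul, mul_one, trace_mul_kronecker_one, ← Matrix.mul_assoc,
    h, Matrix.zero_mul, trace_zero]

end PartialTrace

namespace IsState

variable {m n : Type*} [Fintype m] [Fintype n]

protected lemma reindex (e : m ≃ n) {ρ : Matrix m m ℂ} (hρ : IsState ρ) :
    IsState (reindex e e ρ) :=
  ⟨hρ.1.submatrix e.symm, (Equiv.sum_comp e.symm fun i => ρ i i).trans hρ.2⟩

protected lemma kronecker {ρ : Matrix m m ℂ} {σ : Matrix n n ℂ} (hρ : IsState ρ)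
    (hσ : IsState σ) : IsState (ρ ⊗ₖ σ) :=
  ⟨hρ.1.kronecker hσ.1, by rw [trace_kronecker, hρ.2, hσ.2, mul_one]⟩

protected lemma ptraceR {ρ : Matrix (A × B) (A × B) ℂ} (hρ : IsState ρ) :
    IsState (ptraceR ρ) := by
  constructor
  · have hsum : ptraceR ρ = ∑ b, ρ.submatrix (·, b) (·, b) := by
      ext a a'
      simp [ptraceR, Matrix.sum_apply]
    exact hsum ▸ posSemidef_sum _ fun b _ => hρ.1.submatrix _
  · exact (Fintype.sum_prod_type fun x => ρ x x).symm.trans hρ.2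

protected lemma ptraceL {ρ : Matrix (A × B) (A × B) ℂ} (hρ : IsState ρ) :
    IsState (ptraceL ρ) := by
  constructor
  · have hsum : ptraceL ρ = ∑ a, ρ.submatrix (a, ·) (a, ·) := by
      ext b b'
      simp [ptraceL, Matrix.sum_apply]
    exact hsum ▸ posSemidef_sum _ fun a _ => hρ.1.submatrix _
  · exact (Fintype.sum_prod_type_right fun x => ρ x x).symm.trans hρ.2

lemma vonNeumannEntropy_kronecker {ρ : Matrix m m ℂ} {σ : Matrix n n ℂ} (hρ : IsState ρ)
    (hσ : IsState σ) :
    vonNeumannEntropy (ρ ⊗ₖ σ) = vonNeumannEntropy ρ + vonNeumannEntropy σ := by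
  rw [_root_.vonNeumannEntropy_kronecker hρ.1.1 hσ.1.1, hρ.2, hσ.2]
  simp

end IsState

section PureState

variable {n : Type*} [Fintype n]

lemma isState_outer_iff {ψ : n → ℂ} : IsState (outer ψ) ↔ ∑ i, ‖ψ i‖ ^ 2 = 1 := by
  have htrace : (outer ψ).trace = ((∑ i, ‖ψ i‖ ^ 2 : ℝ) : ℂ) := by
    simp [outer, trace_vecMulVec, dotProduct, Complex.mul_conj']
  rw [IsState, htrace, Complex.ofReal_eq_one]
  exact and_iff_right (posSemidef_vecMulVec_self_star ψ)

lemma outer_mul_outer (ψ : n → ℂ) : outer ψ * outer ψ = (outer ψ).trace • outer ψ := by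
  rw [outer, vecMulVec_mul_vecMulVec, trace_vecMulVec, dotProduct_comm, vecMulVec_smul]

lemma vonNeumannEntropy_outer {ψ : n → ℂ} (hψ : IsState (outer ψ)) :
    vonNeumannEntropy (outer ψ) = 0 := by
  have hcol : outer ψ = replicateCol Unit ψ * replicateRow Unit (star ψ) := vecMulVec_eq Unit _ _
  have hrow : replicateRow Unit (star ψ) * replicateCol Unit ψ = 1 := by
    ext
    simpa [outer, trace_vecMulVec, dotProduct_comm] using hψ.2
  rw [hcol, vonNeumannEntropy_mul_comm (hcol ▸ hψ.1.1) (hrow ▸ isHermitian_one), hrow,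
    vonNeumannEntropy_eq_of_charpoly_eq_prod (a := fun _ : Unit => 1) isHermitian_one
      (by simp [charpoly_one])]
  simp

lemma vonNeumannEntropy_ptraceL_outer (ψ : A × B → ℂ) :
    vonNeumannEntropy (ptraceL (outer ψ)) = vonNeumannEntropy (ptraceR (outer ψ)) := by
  let M : Matrix A B ℂ := Matrix.of fun a b => ψ (a, b)
  have hR : ptraceR (outer ψ) = M * Mᴴ := by
    ext a a'
    simp [ptraceR, outer, vecMulVec_apply, mul_apply, M]
  have hL : ptraceL (outer ψ) = (Mᴴ * M)ᵀ := by
    ext b b'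
    simp [ptraceL, outer, vecMulVec_apply, mul_apply, M, mul_comm]
  rw [hL, hR, vonNeumannEntropy_transpose (isHermitian_conjTranspose_mul_self M),
    vonNeumannEntropy_mul_comm (isHermitian_conjTranspose_mul_self M)
      (isHermitian_mul_conjTranspose_self M)]

lemma exists_outer_kronecker_one_compression_eq (ψ : n → ℂ) (ρ : Matrix (n × E) (n × E) ℂ) :
    ∃ σ : Matrix E E ℂ,
      (outer ψ ⊗ₖ (1 : Matrix E E ℂ)) * ρ * (outer ψ ⊗ₖ (1 : Matrix E E ℂ)) = outer ψ ⊗ₖ σ := by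
  let ket : Matrix (n × E) (Unit × E) ℂ := replicateCol Unit ψ ⊗ₖ (1 : Matrix E E ℂ)
  let bra : Matrix (Unit × E) (n × E) ℂ := replicateRow Unit (star ψ) ⊗ₖ (1 : Matrix E E ℂ)
  have houter : outer ψ = replicateCol Unit ψ * replicateRow Unit (star ψ) := vecMulVec_eq Unit _ _
  have hket_bra : outer ψ ⊗ₖ (1 : Matrix E E ℂ) = ket * bra := by
    rw [houter, ← mul_kronecker_mul, mul_one]
  let σ : Matrix E E ℂ := (bra * ρ * ket).submatrix (Prod.mk ()) (Prod.mk ())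
  have hσ : bra * ρ * ket = (1 : Matrix Unit Unit ℂ) ⊗ₖ σ := by
    ext ⟨_, e⟩ ⟨_, f⟩
    simp [σ]
  use σ
  calc (outer ψ ⊗ₖ 1) * ρ * (outer ψ ⊗ₖ 1)
      = ket * (bra * ρ * ket) * bra := by simp only [hket_bra, Matrix.mul_assoc]
    _ = outer ψ ⊗ₖ σ := by
      rw [hσ, ← mul_kronecker_mul, ← mul_kronecker_mul, Matrix.mul_one, Matrix.one_mul,
        Matrix.mul_one, ← houter]

theorem eq_outer_kronecker_ptraceL {ψ : A → ℂ} {ρ : Matrix (A × B) (A × B) ℂ} (hρ : IsState ρ)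
    (h : ptraceR ρ = outer ψ) : ρ = outer ψ ⊗ₖ ptraceL ρ := by
  have hψ : IsState (outer ψ) := h ▸ hρ.ptraceR
  set P : Matrix (A × B) (A × B) ℂ := outer ψ ⊗ₖ (1 : Matrix B B ℂ) with hP
  have hPherm : P.IsHermitian := isHermitian_kronecker hψ.1.1 isHermitian_one
  have hρP : ρ * P = ρ := by
    have hzero : ρ * ((1 - outer ψ) ⊗ₖ (1 : Matrix B B ℂ)) = 0 := by
      apply mul_kronecker_one_eq_zero_of_ptraceR_mul_eq_zero hρ.1
      rw [h, mul_sub, mul_one, outer_mul_outer, hψ.2, one_smul, sub_self]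
    calc ρ * P = ρ * ((1 - outer ψ) ⊗ₖ 1) + ρ * P := by rw [hzero, zero_add]
      _ = ρ := by
        rw [← mul_add, ← add_kronecker, sub_add_cancel, one_kronecker_one, Matrix.mul_one]
  have hPρ : P * ρ = ρ := by
    simpa only [conjTranspose_mul, hPherm.eq, hρ.1.1.eq] using congrArg conjTranspose hρP
  obtain ⟨σ, hσ⟩ := exists_outer_kronecker_one_compression_eq ψ ρ
  rw [← hP, hPρ, hρP] at hσ
  rw [hσ, ptraceL_kronecker, hψ.2, one_smul]

end PureState

section TrivialExtension

/-- The product `ρ^{AB} ⊗ σ^E`, with its index type `(A × B) × E` reassociated to `A × B × E`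
so that it is an extension of `ρ^{AB}` in the sense of `margAB`. -/
def trivialExtension {A B E : Type*} (ρ : Matrix (A × B) (A × B) ℂ) (σ : Matrix E E ℂ) :
    Matrix (A × B × E) (A × B × E) ℂ :=
  reindex (Equiv.prodAssoc A B E) (Equiv.prodAssoc A B E) (ρ ⊗ₖ σ)

lemma margAB_eq_ptraceR (ρ : Matrix (A × B × E) (A × B × E) ℂ) :
    margAB ρ = ptraceR (reindex (Equiv.prodAssoc A B E).symm (Equiv.prodAssoc A B E).symm ρ) :=
  rfl

lemma margE_eq_ptraceL (ρ : Matrix (A × B × E) (A × B × E) ℂ) :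
    margE ρ = ptraceL (reindex (Equiv.prodAssoc A B E).symm (Equiv.prodAssoc A B E).symm ρ) := by
  ext e e'
  exact (Fintype.sum_prod_type fun x : A × B => ρ (x.1, x.2, e) (x.1, x.2, e')).symm

lemma IsState.margE {ρ : Matrix (A × B × E) (A × B × E) ℂ} (hρ : IsState ρ) :
    IsState (margE ρ) :=
  margE_eq_ptraceL ρ ▸ (hρ.reindex _).ptraceL

lemma IsState.trivialExtension {ρ : Matrix (A × B) (A × B) ℂ} {σ : Matrix E E ℂ}
    (hρ : IsState ρ) (hσ : IsState σ) : IsState (trivialExtension ρ σ) :=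
  (hρ.kronecker hσ).reindex _

lemma margAB_trivialExtension {A B : Type*} (ρ : Matrix (A × B) (A × B) ℂ) (σ : Matrix E E ℂ) :
    margAB (trivialExtension ρ σ) = σ.trace • ρ := by
  ext x y
  simp [margAB, trivialExtension, trace, ← Finset.mul_sum, mul_comm]

lemma margE_trivialExtension {E : Type*} (ρ : Matrix (A × B) (A × B) ℂ) (σ : Matrix E E ℂ) :
    margE (trivialExtension ρ σ) = ρ.trace • σ := by
  ext e e'
  simp [margE, trivialExtension, trace, ← Finset.sum_mul, Fintype.sum_prod_type]

lemma margAE_trivialExtension {E : Type*} (ρ : Matrix (A × B) (A × B) ℂ) (σ : Matrix E E ℂ) :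
    margAE (trivialExtension ρ σ) = ptraceR ρ ⊗ₖ σ := by
  ext x y
  simp [margAE, trivialExtension, ptraceR, Finset.sum_mul]

lemma margBE_trivialExtension {E : Type*} (ρ : Matrix (A × B) (A × B) ℂ) (σ : Matrix E E ℂ) :
    margBE (trivialExtension ρ σ) = ptraceL ρ ⊗ₖ σ := by
  ext x y
  simp [margBE, trivialExtension, ptraceL, Finset.sum_mul]

lemma condMutualInfo_trivialExtension {ρ : Matrix (A × B) (A × B) ℂ} {σ : Matrix E E ℂ}
    (hρ : IsState ρ) (hσ : IsState σ) :
    condMutualInfo (trivialExtension ρ σ) =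
      vonNeumannEntropy (ptraceR ρ) + vonNeumannEntropy (ptraceL ρ) - vonNeumannEntropy ρ := by
  have hABE : vonNeumannEntropy (trivialExtension ρ σ) =
      vonNeumannEntropy ρ + vonNeumannEntropy σ := by
    rw [trivialExtension, vonNeumannEntropy_reindex _ (hρ.kronecker hσ).1.1,
      hρ.vonNeumannEntropy_kronecker hσ]
  rw [condMutualInfo, margAE_trivialExtension, margBE_trivialExtension, margE_trivialExtension,
    hρ.ptraceR.vonNeumannEntropy_kronecker hσ, hρ.ptraceL.vonNeumannEntropy_kronecker hσ, hABE,
    hρ.2, one_smul]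
  ring

end TrivialExtension

lemma eq_trivialExtension_of_margAB_eq_outer {ψ : A × B → ℂ}
    {ρ : Matrix (A × B × E) (A × B × E) ℂ} (hρ : IsState ρ) (h : margAB ρ = outer ψ) :
    ρ = trivialExtension (outer ψ) (margE ρ) := by
  rw [margAB_eq_ptraceR] at h
  rw [margE_eq_ptraceL, trivialExtension, ← eq_outer_kronecker_ptraceL (hρ.reindex _) h]
  simp

lemma half_condMutualInfo_of_margAB_eq_outer {ψ : A × B → ℂ}
    {ρ : Matrix (A × B × E) (A × B × E) ℂ} (hρ : IsState ρ) (h : margAB ρ = outer ψ) :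
    1 / 2 * condMutualInfo ρ = vonNeumannEntropy (ptraceR (outer ψ)) := by
  have hψ : IsState (outer ψ) := h ▸ (hρ.reindex (Equiv.prodAssoc A B E).symm).ptraceR
  rw [eq_trivialExtension_of_margAB_eq_outer hρ h, condMutualInfo_trivialExtension hψ hρ.margE,
    vonNeumannEntropy_ptraceL_outer, vonNeumannEntropy_outer hψ]
  ring

theorem Esq_outer {ψ : A × B → ℂ} (hψ : IsState (outer ψ)) :
    Esq (outer ψ) = vonNeumannEntropy (ptraceR (outer ψ)) := by
  have hone : IsState (1 : Matrix (Fin 1) (Fin 1) ℂ) := ⟨PosSemidef.one, by simp⟩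
  have hext : margAB (trivialExtension (outer ψ) (1 : Matrix (Fin 1) (Fin 1) ℂ)) = outer ψ := by
    rw [margAB_trivialExtension, hone.2, one_smul]
  refine (congrArg sInf (Set.eq_singleton_iff_unique_mem.2 ⟨?_, ?_⟩)).trans (csInf_singleton _)
  · exact ⟨1, _, hψ.trivialExtension hone, hext,
      (half_condMutualInfo_of_margAB_eq_outer (hψ.trivialExtension hone) hext).symm⟩
  · rintro _ ⟨d, ρ, hρ, hAB, rfl⟩
    exact half_condMutualInfo_of_margAB_eq_outer hρ hAB

/-- For a pure state `ρ^{AB} = |ψ⟩⟨ψ|`, every extension is of the form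
`ρ^{AB} ⊗ ρ^E`, and the squashed entanglement equals the entropy of entanglement
`S(Tr_B |ψ⟩⟨ψ|)`. -/
theorem pure_state_extensions_and_squashed_entanglement
    {A B : Type*} [Fintype A] [Fintype B]
    (ψ : A × B → ℂ) (hψ : ∑ i, ‖ψ i‖ ^ 2 = 1) :
    (∀ (d : ℕ) (ρE : Matrix (A × B × Fin d) (A × B × Fin d) ℂ),
        IsState ρE → margAB ρE = outer ψ →
        ∃ σ : Matrix (Fin d) (Fin d) ℂ, IsState σ ∧
          ρE = Matrix.reindex (Equiv.prodAssoc A B (Fin d)) (Equiv.prodAssoc A B (Fin d))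
                 (outer ψ ⊗ₖ σ)) ∧
    Esq (outer ψ) = vonNeumannEntropy (ptraceR (outer ψ)) :=
  ⟨fun _ ρE hρE hAB =>
      ⟨margE ρE, hρE.margE, eq_trivialExtension_of_margAB_eq_outer hρE hAB⟩,
    Esq_outer (isState_outer_iff.2 hψ)⟩

end
end

section
/- Squashed entanglement is convex: for any two states ρ^{AB}, σ^{AB} on H_A ⊗ H_B and any 0 ≤ λ ≤ 1, E_sq(λ ρ^{AB} + (1-λ) σ^{AB}) ≤ λ E_sq(ρ^{AB}) + (1-λ) E_sq(σ^{AB}). -/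
open Matrix BigOperators Kronecker
open scoped Classical ComplexOrder

noncomputable section

variable {A B E : Type*} [Fintype A] [Fintype B] [Fintype E]

/-! Given extensions `R` of `ρ` and `T` of `σ`, the flagged state
`l R ⊗ |0⟩⟨0| + (1 - l) T ⊗ |1⟩⟨1|` extends `l ρ + (1 - l) σ`. Its spectrum, and that of each of its
marginals on `AE`, `BE` and `E`, is the union of the rescaled spectra for `R` and `T`, so its
conditional mutual information is `l I(A;B|E)_R + (1 - l) I(A;B|E)_T`; take `R` and `T` nearly
optimal.

An infimum of real numbers is only meaningful for a set bounded below. Here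
`I(A;B|E) = (S(AE) - S(E)) + (S(BE) - S(ABE))`, and adjoining the system `A` changes the entropy of
a state by at most `log₂ |A|` in either direction: upwards because measuring in the eigenbasis of
the marginal only increases the entropy, downwards by passing to a purification. This crude bound
replaces strong subadditivity.
-/

section NegMulLogTwo

/-- The function `-x log₂ x` summed over the spectrum in `vonNeumannEntropy`. -/
def negMulLogTwo (x : ℝ) : ℝ := -(x * Real.logb 2 x)

lemma negMulLogTwo_eq (x : ℝ) : negMulLogTwo x = (Real.log 2)⁻¹ * Real.negMulLog x := by
  simp only [negMulLogTwo, Real.negMulLog, Real.logb]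
  ring

@[simp]
lemma negMulLogTwo_zero : negMulLogTwo 0 = 0 := by simp [negMulLogTwo]

lemma negMulLogTwo_inv (x : ℝ) : negMulLogTwo x⁻¹ = x⁻¹ * Real.logb 2 x := by
  simp [negMulLogTwo, Real.logb_inv]

lemma negMulLogTwo_mul (x y : ℝ) :
    negMulLogTwo (x * y) = y * negMulLogTwo x + x * negMulLogTwo y := by
  simp only [negMulLogTwo_eq, Real.negMulLog_mul]
  ring

lemma concaveOn_negMulLogTwo : ConcaveOn ℝ (Set.Ici 0) negMulLogTwo := by
  have h := Real.concaveOn_negMulLog.smul (inv_nonneg.2 (Real.log_nonneg one_le_two))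
  simpa only [smul_eq_mul, ← negMulLogTwo_eq] using h

-- Jensen's inequality for the uniform distribution on `ι`.
lemma sum_negMulLogTwo_le {ι : Type*} [Fintype ι] {q : ι → ℝ} (hq : ∀ i, 0 ≤ q i) :
    ∑ i, negMulLogTwo (q i)
      ≤ negMulLogTwo (∑ i, q i) + (∑ i, q i) * Real.logb 2 (Fintype.card ι) := by
  cases isEmpty_or_nonempty ι
  · simp
  have hcard : (0 : ℝ) < Fintype.card ι := mod_cast Fintype.card_pos
  have jensen := concaveOn_negMulLogTwo.le_map_sum (t := Finset.univ)
    (w := fun _ : ι ↦ (Fintype.card ι : ℝ)⁻¹) (p := q) (fun _ _ ↦ by positivity) (by simp)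
    (fun i _ ↦ hq i)
  simp only [smul_eq_mul, ← Finset.mul_sum, negMulLogTwo_mul, negMulLogTwo_inv] at jensen
  field_simp at jensen
  linarith

end NegMulLogTwo

section Blocks

lemma trace_submatrix_equiv {m n R : Type*} [Fintype m] [Fintype n] [AddCommMonoid R]
    (M : Matrix n n R) (e : m ≃ n) : (M.submatrix e e).trace = M.trace :=
  e.sum_comp fun i ↦ M i i

lemma trace_fromBlocks {m n R : Type*} [Fintype m] [Fintype n] [AddCommMonoid R]
    (M : Matrix m m R) (P : Matrix m n R) (Q : Matrix n m R) (N : Matrix n n R) :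
    (fromBlocks M P Q N).trace = M.trace + N.trace := by
  simp [Matrix.trace]

lemma posSemidef_fromBlocks_diagonal {m n R : Type*} [Finite m] [Finite n] [Ring R]
    [PartialOrder R] [StarRing R] [AddLeftMono R] {M : Matrix m m R} {N : Matrix n n R}
    (hM : M.PosSemidef) (hN : N.PosSemidef) : (fromBlocks M 0 0 N).PosSemidef := by
  cases nonempty_fintype m
  cases nonempty_fintype n
  refine .of_dotProduct_mulVec_nonneg (hM.1.fromBlocks conjTranspose_zero hN.1) fun x ↦ ?_
  have h := add_nonneg (hM.dotProduct_mulVec_nonneg (x ∘ Sum.inl))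
    (hN.dotProduct_mulVec_nonneg (x ∘ Sum.inr))
  simpa [fromBlocks_mulVec, dotProduct, Fintype.sum_sum_type] using h

end Blocks

section HermitianMatrices

variable {n 𝕜 : Type*} [Fintype n] [RCLike 𝕜]

lemma norm_sq_mem_doublyStochastic [DecidableEq n] {U : Matrix n n 𝕜}
    (hU : U ∈ unitaryGroup n 𝕜) :
    Matrix.of (fun i j ↦ ‖U i j‖ ^ 2) ∈ doublyStochastic ℝ n := by
  have hrow (i : n) : ∑ j, ‖U i j‖ ^ 2 = 1 := by
    have h := congrFun₂ (mem_unitaryGroup_iff.1 hU) i i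
    simp only [mul_apply, star_apply, one_apply_eq, RCLike.star_def, RCLike.mul_conj] at h
    exact_mod_cast h
  have hcol (j : n) : ∑ i, ‖U i j‖ ^ 2 = 1 := by
    have h := congrFun₂ (mem_unitaryGroup_iff'.1 hU) j j
    simp only [mul_apply, star_apply, one_apply_eq, RCLike.star_def, RCLike.conj_mul] at h
    exact_mod_cast h
  exact mem_doublyStochastic_iff_sum.2 ⟨fun _ _ ↦ sq_nonneg _, hrow, hcol⟩

lemma re_diag_eq_sum_norm_sq_mul_eigenvalues [DecidableEq n] {M : Matrix n n 𝕜}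
    (hM : M.IsHermitian) (i : n) :
    RCLike.re (M i i)
      = ∑ j, ‖(hM.eigenvectorUnitary : Matrix n n 𝕜) i j‖ ^ 2 * hM.eigenvalues j := by
  conv_lhs => rw [hM.spectral_theorem]
  rw [Unitary.conjStarAlgAut_apply, mul_apply, map_sum]
  refine Finset.sum_congr rfl fun j _ ↦ ?_
  rw [mul_diagonal, star_apply, RCLike.star_def, mul_right_comm, RCLike.mul_conj,
    Function.comp_apply]
  norm_cast

-- The diagonal is the image of the spectrum under a doubly stochastic matrix.
lemma sum_concaveOn_eigenvalues_le_sum_diag [DecidableEq n] {M : Matrix n n 𝕜}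
    (hM : M.IsHermitian) {s : Set ℝ} {f : ℝ → ℝ} (hf : ConcaveOn ℝ s f)
    (hs : ∀ i, hM.eigenvalues i ∈ s) :
    ∑ i, f (hM.eigenvalues i) ≤ ∑ i, f (RCLike.re (M i i)) := by
  obtain ⟨hnonneg, hrow, hcol⟩ :=
    mem_doublyStochastic_iff_sum.1 (norm_sq_mem_doublyStochastic hM.eigenvectorUnitary.2)
  set D : Matrix n n ℝ := Matrix.of fun i j ↦
    ‖(hM.eigenvectorUnitary : Matrix n n 𝕜) i j‖ ^ 2
  calc ∑ j, f (hM.eigenvalues j) = ∑ j, ∑ i, D i j * f (hM.eigenvalues j) := by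
        simp only [← Finset.sum_mul, hcol, one_mul]
    _ = ∑ i, ∑ j, D i j * f (hM.eigenvalues j) := Finset.sum_comm
    _ ≤ ∑ i, f (∑ j, D i j * hM.eigenvalues j) := Finset.sum_le_sum fun i _ ↦
        hf.le_map_sum (fun j _ ↦ hnonneg i j) (hrow i) fun j _ ↦ hs j
    _ = ∑ i, f (RCLike.re (M i i)) := by
        simp only [re_diag_eq_sum_norm_sq_mul_eigenvalues hM, D, Matrix.of_apply]

end HermitianMatrices

section Entropy

variable {m n : Type*} [Fintype m] [Fintype n]

/-- The entropy read off a characteristic polynomial: the sum of `-x log₂ x` over the real parts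
`x` of its roots, with multiplicity. Unlike `Matrix.IsHermitian.eigenvalues`, the roots do not
depend on the index type. -/
def rootEntropy (p : Polynomial ℂ) : ℝ := (p.roots.map fun z ↦ negMulLogTwo z.re).sum

lemma rootEntropy_mul {p q : Polynomial ℂ} (hp : p ≠ 0) (hq : q ≠ 0) :
    rootEntropy (p * q) = rootEntropy p + rootEntropy q := by
  simp [rootEntropy, Polynomial.roots_mul (mul_ne_zero hp hq)]

lemma rootEntropy_X_pow_mul (k : ℕ) {p : Polynomial ℂ} (hp : p ≠ 0) :
    rootEntropy (Polynomial.X ^ k * p) = rootEntropy p := by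
  rw [rootEntropy_mul (pow_ne_zero k Polynomial.X_ne_zero) hp]
  simp [rootEntropy, Multiset.map_nsmul, Multiset.sum_nsmul]

lemma rootEntropy_prod_X_sub_C (d : n → ℝ) :
    rootEntropy (∏ i, (Polynomial.X - Polynomial.C (d i : ℂ))) = ∑ i, negMulLogTwo (d i) := by
  rw [rootEntropy, Polynomial.roots_prod _ _
    (Finset.prod_ne_zero_iff.2 fun i _ ↦ Polynomial.X_sub_C_ne_zero _)]
  simp

lemma vonNeumannEntropy_eq_sum_eigenvalues [DecidableEq n] {ρ : Matrix n n ℂ}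
    (hρ : ρ.IsHermitian) : vonNeumannEntropy ρ = ∑ i, negMulLogTwo (hρ.eigenvalues i) := by
  rw [vonNeumannEntropy, dif_pos hρ]
  simp only [negMulLogTwo]
  congr!

lemma vonNeumannEntropy_eq_rootEntropy [DecidableEq n] {ρ : Matrix n n ℂ}
    (hρ : ρ.IsHermitian) : vonNeumannEntropy ρ = rootEntropy ρ.charpoly := by
  rw [vonNeumannEntropy_eq_sum_eigenvalues hρ, hρ.charpoly_eq]
  exact (rootEntropy_prod_X_sub_C _).symm

lemma vonNeumannEntropy_submatrix_equiv {ρ : Matrix n n ℂ} (hρ : ρ.IsHermitian) (e : m ≃ n) :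
    vonNeumannEntropy (ρ.submatrix e e) = vonNeumannEntropy ρ := by
  rw [vonNeumannEntropy_eq_rootEntropy (hρ.submatrix e), vonNeumannEntropy_eq_rootEntropy hρ,
    ← charpoly_reindex e.symm ρ]
  rfl

lemma vonNeumannEntropy_fromBlocks_diagonal {ρ : Matrix m m ℂ} {σ : Matrix n n ℂ}
    (hρ : ρ.IsHermitian) (hσ : σ.IsHermitian) :
    vonNeumannEntropy (fromBlocks ρ 0 0 σ) = vonNeumannEntropy ρ + vonNeumannEntropy σ := by
  rw [vonNeumannEntropy_eq_rootEntropy (hρ.fromBlocks conjTranspose_zero hσ),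
    charpoly_fromBlocks_zero₁₂, rootEntropy_mul (charpoly_monic _).ne_zero
    (charpoly_monic _).ne_zero, vonNeumannEntropy_eq_rootEntropy hρ,
    vonNeumannEntropy_eq_rootEntropy hσ]

lemma vonNeumannEntropy_self_mul_conjTranspose (M : Matrix m n ℂ) :
    vonNeumannEntropy (M * Mᴴ) = vonNeumannEntropy (Mᴴ * M) := by
  rw [vonNeumannEntropy_eq_rootEntropy (isHermitian_mul_conjTranspose_self M),
    vonNeumannEntropy_eq_rootEntropy (isHermitian_conjTranspose_mul_self M),
    ← rootEntropy_X_pow_mul (Fintype.card n) (charpoly_monic _).ne_zero, charpoly_mul_comm',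
    rootEntropy_X_pow_mul _ (charpoly_monic _).ne_zero]

lemma vonNeumannEntropy_unitary_conj [DecidableEq n] {ρ U : Matrix n n ℂ} (hρ : ρ.IsHermitian)
    (hU : U ∈ unitaryGroup n ℂ) : vonNeumannEntropy (Uᴴ * ρ * U) = vonNeumannEntropy ρ := by
  rw [vonNeumannEntropy_eq_rootEntropy (isHermitian_conjTranspose_mul_mul U hρ),
    vonNeumannEntropy_eq_rootEntropy hρ, mul_assoc, charpoly_mul_comm, mul_assoc,
    ← star_eq_conjTranspose, mem_unitaryGroup_iff.1 hU, mul_one]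

omit [Fintype n] in
lemma isHermitian_ofReal_smul {ρ : Matrix n n ℂ} (hρ : ρ.IsHermitian) (c : ℝ) :
    ((c : ℂ) • ρ).IsHermitian :=
  hρ.smul (Complex.conj_ofReal c)

lemma vonNeumannEntropy_smul {ρ : Matrix n n ℂ} (hρ : ρ.IsHermitian) (c : ℝ) :
    vonNeumannEntropy ((c : ℂ) • ρ)
      = c * vonNeumannEntropy ρ + ρ.trace.re * negMulLogTwo c := by
  have hcharpoly : ((c : ℂ) • ρ).charpoly
      = ∏ i, (Polynomial.X - Polynomial.C ((c * hρ.eigenvalues i : ℝ) : ℂ)) := by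
    rw [Complex.coe_smul, ← cfc_const_mul_id c ρ hρ.isSelfAdjoint]
    exact hρ.charpoly_cfc_eq _
  rw [vonNeumannEntropy_eq_rootEntropy (isHermitian_ofReal_smul hρ c), hcharpoly,
    rootEntropy_prod_X_sub_C, vonNeumannEntropy_eq_sum_eigenvalues hρ,
    hρ.trace_eq_sum_eigenvalues, Complex.re_sum, Finset.sum_mul, Finset.mul_sum,
    ← Finset.sum_add_distrib]
  refine Finset.sum_congr rfl fun i _ ↦ ?_
  rw [negMulLogTwo_mul, add_comm]
  rfl

lemma vonNeumannEntropy_le_sum_diag {ρ : Matrix n n ℂ} (hρ : ρ.PosSemidef) :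
    vonNeumannEntropy ρ ≤ ∑ i, negMulLogTwo (ρ i i).re := by
  rw [vonNeumannEntropy_eq_sum_eigenvalues hρ.isHermitian]
  exact sum_concaveOn_eigenvalues_le_sum_diag hρ.isHermitian concaveOn_negMulLogTwo
    hρ.eigenvalues_nonneg

end Entropy

section PartialTrace

variable {X Y : Type*} [Fintype X] [Fintype Y]

lemma ptraceL_eq_sum_submatrix (ρ : Matrix (Y × X) (Y × X) ℂ) :
    ptraceL ρ = ∑ y, ρ.submatrix (Prod.mk y) (Prod.mk y) := by
  ext i j
  simp only [ptraceL, Matrix.sum_apply, submatrix_apply]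

lemma isHermitian_ptraceL {ρ : Matrix (Y × X) (Y × X) ℂ} (hρ : ρ.IsHermitian) :
    (ptraceL ρ).IsHermitian := by
  refine .ext fun i j ↦ ?_
  simp only [ptraceL, star_sum, hρ.apply]

lemma posSemidef_ptraceL {ρ : Matrix (Y × X) (Y × X) ℂ} (hρ : ρ.PosSemidef) :
    (ptraceL ρ).PosSemidef := by
  rw [ptraceL_eq_sum_submatrix]
  exact posSemidef_sum _ fun y _ ↦ hρ.submatrix _

lemma trace_ptraceL (ρ : Matrix (Y × X) (Y × X) ℂ) : (ptraceL ρ).trace = ρ.trace := by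
  simp only [Matrix.trace, diag_apply, ptraceL, Fintype.sum_prod_type]
  exact Finset.sum_comm

lemma ptraceL_one_kronecker_conj [DecidableEq Y] {Z : Type*} [Fintype Z]
    (ρ : Matrix (Y × X) (Y × X) ℂ) (V : Matrix X Z ℂ) :
    ptraceL (((1 : Matrix Y Y ℂ) ⊗ₖ V)ᴴ * ρ * ((1 : Matrix Y Y ℂ) ⊗ₖ V))
      = Vᴴ * ptraceL ρ * V := by
  have hblock (y : Y) :
      (((1 : Matrix Y Y ℂ) ⊗ₖ V)ᴴ * ρ * ((1 : Matrix Y Y ℂ) ⊗ₖ V)).submatrix (Prod.mk y) (Prod.mk y)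
        = Vᴴ * ρ.submatrix (Prod.mk y) (Prod.mk y) * V := by
    ext i j
    simp [mul_apply, Fintype.sum_prod_type, kroneckerMap_apply, one_apply, ite_mul, apply_ite]
  simp only [ptraceL_eq_sum_submatrix, hblock, Matrix.mul_sum, Matrix.sum_mul]

lemma vonNeumannEntropy_le_sum_diag_ptraceL {ρ : Matrix (Y × X) (Y × X) ℂ}
    (hρ : ρ.PosSemidef) :
    vonNeumannEntropy ρ ≤ ∑ x, negMulLogTwo (ptraceL ρ x x).re
      + ρ.trace.re * Real.logb 2 (Fintype.card Y) := by
  calc vonNeumannEntropy ρ ≤ ∑ p, negMulLogTwo (ρ p p).re := vonNeumannEntropy_le_sum_diag hρ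
    _ = ∑ x, ∑ y, negMulLogTwo (ρ (y, x) (y, x)).re := Fintype.sum_prod_type_right _
    _ ≤ ∑ x, (negMulLogTwo (ptraceL ρ x x).re
          + (ptraceL ρ x x).re * Real.logb 2 (Fintype.card Y)) := by
        refine Finset.sum_le_sum fun x _ ↦ ?_
        rw [ptraceL, Complex.re_sum]
        exact sum_negMulLogTwo_le fun y ↦ (Complex.le_def.1 hρ.diag_nonneg).1
    _ = _ := by
        rw [Finset.sum_add_distrib, ← Finset.sum_mul, ← trace_ptraceL, Matrix.trace,
          Complex.re_sum]
        simp only [diag_apply]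

-- Rotate `X` to the eigenbasis of the marginal, where the marginal is its own diagonal.
lemma vonNeumannEntropy_le_vonNeumannEntropy_ptraceL_add {ρ : Matrix (Y × X) (Y × X) ℂ}
    (hρ : ρ.PosSemidef) :
    vonNeumannEntropy ρ
      ≤ vonNeumannEntropy (ptraceL ρ) + ρ.trace.re * Real.logb 2 (Fintype.card Y) := by
  have hmarg := isHermitian_ptraceL hρ.isHermitian
  let U := hmarg.eigenvectorUnitary
  let W : Matrix (Y × X) (Y × X) ℂ := (1 : Matrix Y Y ℂ) ⊗ₖ (U : Matrix X X ℂ)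
  have hW : W ∈ unitaryGroup (Y × X) ℂ := kronecker_mem_unitary (one_mem _) U.2
  have hdiag : ptraceL (Wᴴ * ρ * W) = diagonal (fun x ↦ (hmarg.eigenvalues x : ℂ)) := by
    have h := hmarg.conjStarAlgAut_star_eigenvectorUnitary
    rw [Unitary.conjStarAlgAut_apply] at h
    rw [ptraceL_one_kronecker_conj, ← star_eq_conjTranspose]
    simpa [Function.comp_def] using h
  have htrace : (Wᴴ * ρ * W).trace = ρ.trace := by
    rw [trace_mul_cycle, ← star_eq_conjTranspose, mem_unitaryGroup_iff.1 hW, one_mul]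
  have h := vonNeumannEntropy_le_sum_diag_ptraceL (hρ.conjTranspose_mul_mul_same W)
  rw [vonNeumannEntropy_unitary_conj hρ.isHermitian hW, htrace, hdiag] at h
  rw [vonNeumannEntropy_eq_sum_eigenvalues hmarg]
  simpa using h

/-- If `M` is the matrix of coefficients of a vector of `(Y ⊗ X) ⊗ Z`, then `regroup M` is the
matrix of coefficients of the same vector in `X ⊗ (Y ⊗ Z)`. With `ρ = M * Mᴴ` the vector is a
purification of `ρ`. -/
def regroup {X Y Z : Type*} (M : Matrix (Y × X) Z ℂ) : Matrix X (Y × Z) ℂ :=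
  Matrix.of fun x p ↦ M (p.1, x) p.2

lemma regroup_mul_conjTranspose {Z : Type*} [Fintype Z] (M : Matrix (Y × X) Z ℂ) :
    regroup M * (regroup M)ᴴ = ptraceL (M * Mᴴ) := by
  ext i j
  simp [regroup, ptraceL, mul_apply, Fintype.sum_prod_type]

lemma ptraceL_conjTranspose_regroup_mul {Z : Type*} [Fintype Z] (M : Matrix (Y × X) Z ℂ) :
    ptraceL ((regroup M)ᴴ * regroup M) = Mᴴ * M := by
  ext i j
  simp [regroup, ptraceL, mul_apply, Fintype.sum_prod_type]

open scoped MatrixOrder in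
-- In a purification of `ρ` on `(Y ⊗ X) ⊗ Z`, the marginals on `X` and `Y ⊗ Z` have the same
-- entropy, and so do those on `Y ⊗ X` and `Z`.
lemma vonNeumannEntropy_ptraceL_le_vonNeumannEntropy_add {ρ : Matrix (Y × X) (Y × X) ℂ}
    (hρ : ρ.PosSemidef) :
    vonNeumannEntropy (ptraceL ρ)
      ≤ vonNeumannEntropy ρ + ρ.trace.re * Real.logb 2 (Fintype.card Y) := by
  obtain ⟨M, rfl⟩ : ∃ M, ρ = M * Mᴴ := CStarAlgebra.nonneg_iff_eq_mul_star_self.1 hρ.nonneg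
  have htrace : ((regroup M)ᴴ * regroup M).trace = (M * Mᴴ).trace := by
    rw [trace_mul_comm, regroup_mul_conjTranspose, trace_ptraceL]
  calc vonNeumannEntropy (ptraceL (M * Mᴴ))
      = vonNeumannEntropy ((regroup M)ᴴ * regroup M) := by
        rw [← regroup_mul_conjTranspose, vonNeumannEntropy_self_mul_conjTranspose]
    _ ≤ vonNeumannEntropy (Mᴴ * M) + (M * Mᴴ).trace.re * Real.logb 2 (Fintype.card Y) := by
        rw [← ptraceL_conjTranspose_regroup_mul, ← htrace]
        exact vonNeumannEntropy_le_vonNeumannEntropy_ptraceL_add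
          (posSemidef_conjTranspose_mul_self _)
    _ = _ := by rw [vonNeumannEntropy_self_mul_conjTranspose]

end PartialTrace

section Marginals

variable {A B E F : Type*}

/-- The exchange of the first two of three factors. -/
def prodLeftComm (A B E : Type*) : A × B × E ≃ B × A × E :=
  (Equiv.prodAssoc A B E).symm.trans
    (((Equiv.prodComm A B).prodCongr (.refl E)).trans (Equiv.prodAssoc B A E))

lemma margAE_eq_ptraceL [Fintype A] [Fintype B] [Fintype E]
    (R : Matrix (A × B × E) (A × B × E) ℂ) :
    margAE R = ptraceL (R.submatrix (prodLeftComm B A E) (prodLeftComm B A E)) :=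
  rfl

lemma margBE_eq_ptraceL [Fintype A] [Fintype B] [Fintype E]
    (R : Matrix (A × B × E) (A × B × E) ℂ) : margBE R = ptraceL R :=
  rfl

lemma margE_eq_ptraceL_margAE [Fintype A] [Fintype B] [Fintype E]
    (R : Matrix (A × B × E) (A × B × E) ℂ) : margE R = ptraceL (margAE R) :=
  rfl

lemma isHermitian_margAE [Fintype B] {R : Matrix (A × B × E) (A × B × E) ℂ}
    (hR : R.IsHermitian) : (margAE R).IsHermitian :=
  .ext fun i j ↦ by simp only [margAE, star_sum, hR.apply]

lemma isHermitian_margBE [Fintype A] {R : Matrix (A × B × E) (A × B × E) ℂ}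
    (hR : R.IsHermitian) : (margBE R).IsHermitian :=
  .ext fun i j ↦ by simp only [margBE, star_sum, hR.apply]

lemma isHermitian_margE [Fintype A] [Fintype B] {R : Matrix (A × B × E) (A × B × E) ℂ}
    (hR : R.IsHermitian) : (margE R).IsHermitian :=
  .ext fun i j ↦ by simp only [margE, star_sum, hR.apply]

lemma trace_margAE [Fintype A] [Fintype B] [Fintype E]
    (R : Matrix (A × B × E) (A × B × E) ℂ) : (margAE R).trace = R.trace := by
  rw [margAE_eq_ptraceL, trace_ptraceL, trace_submatrix_equiv]

lemma trace_margBE [Fintype A] [Fintype B] [Fintype E]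
    (R : Matrix (A × B × E) (A × B × E) ℂ) : (margBE R).trace = R.trace := by
  rw [margBE_eq_ptraceL, trace_ptraceL]

lemma trace_margE [Fintype A] [Fintype B] [Fintype E]
    (R : Matrix (A × B × E) (A × B × E) ℂ) : (margE R).trace = R.trace := by
  rw [margE_eq_ptraceL_margAE, trace_ptraceL, trace_margAE]

lemma margAE_smul [Fintype B] (c : ℂ) (R : Matrix (A × B × E) (A × B × E) ℂ) :
    margAE (c • R) = c • margAE R := by
  ext
  simp [margAE, Finset.mul_sum]

lemma margBE_smul [Fintype A] (c : ℂ) (R : Matrix (A × B × E) (A × B × E) ℂ) :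
    margBE (c • R) = c • margBE R := by
  ext
  simp [margBE, Finset.mul_sum]

lemma margE_smul [Fintype A] [Fintype B] (c : ℂ) (R : Matrix (A × B × E) (A × B × E) ℂ) :
    margE (c • R) = c • margE R := by
  ext
  simp [margE, Finset.mul_sum]

lemma margAB_smul [Fintype E] (c : ℂ) (R : Matrix (A × B × E) (A × B × E) ℂ) :
    margAB (c • R) = c • margAB R := by
  ext
  simp [margAB, Finset.mul_sum]

/-- The distribution of `A × B × ·` over a sum. -/
def prodProdSumDistrib (A B E F : Type*) : A × B × (E ⊕ F) ≃ (A × B × E) ⊕ (A × B × F) :=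
  ((Equiv.refl A).prodCongr (Equiv.prodSumDistrib B E F)).trans
    (Equiv.prodSumDistrib A (B × E) (B × F))

/-- The block diagonal matrix with blocks `R` and `T` as a matrix of `A ⊗ B ⊗ (E ⊕ F)`. The two
summands of `E ⊕ F` play the role of a flag register: up to padding, this is
`R ⊗ |0⟩⟨0| + T ⊗ |1⟩⟨1|`. -/
def directSumE (R : Matrix (A × B × E) (A × B × E) ℂ) (T : Matrix (A × B × F) (A × B × F) ℂ) :
    Matrix (A × B × (E ⊕ F)) (A × B × (E ⊕ F)) ℂ :=
  (fromBlocks R 0 0 T).submatrix (prodProdSumDistrib A B E F) (prodProdSumDistrib A B E F)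

lemma margAE_directSumE [Fintype B] (R : Matrix (A × B × E) (A × B × E) ℂ)
    (T : Matrix (A × B × F) (A × B × F) ℂ) :
    margAE (directSumE R T) = (fromBlocks (margAE R) 0 0 (margAE T)).submatrix
      (Equiv.prodSumDistrib A E F) (Equiv.prodSumDistrib A E F) := by
  ext ⟨a, e | f⟩ ⟨a', e' | f'⟩ <;> simp [margAE, directSumE, prodProdSumDistrib]

lemma margBE_directSumE [Fintype A] (R : Matrix (A × B × E) (A × B × E) ℂ)
    (T : Matrix (A × B × F) (A × B × F) ℂ) :
    margBE (directSumE R T) = (fromBlocks (margBE R) 0 0 (margBE T)).submatrix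
      (Equiv.prodSumDistrib B E F) (Equiv.prodSumDistrib B E F) := by
  ext ⟨b, e | f⟩ ⟨b', e' | f'⟩ <;> simp [margBE, directSumE, prodProdSumDistrib]

lemma margE_directSumE [Fintype A] [Fintype B] (R : Matrix (A × B × E) (A × B × E) ℂ)
    (T : Matrix (A × B × F) (A × B × F) ℂ) :
    margE (directSumE R T) = fromBlocks (margE R) 0 0 (margE T) := by
  ext (e | f) (e' | f') <;> simp [margE, directSumE, prodProdSumDistrib]

lemma margAB_directSumE [Fintype E] [Fintype F] (R : Matrix (A × B × E) (A × B × E) ℂ)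
    (T : Matrix (A × B × F) (A × B × F) ℂ) :
    margAB (directSumE R T) = margAB R + margAB T := by
  ext
  simp [margAB, directSumE, prodProdSumDistrib]

/-- The change of the labels of the third factor along `e`. -/
def relabelE (A B : Type*) (e : F ≃ E) : A × B × F ≃ A × B × E :=
  (Equiv.refl A).prodCongr ((Equiv.refl B).prodCongr e)

lemma margAE_submatrix_relabelE [Fintype B] (R : Matrix (A × B × E) (A × B × E) ℂ) (e : F ≃ E) :
    margAE (R.submatrix (relabelE A B e) (relabelE A B e))
      = (margAE R).submatrix ((Equiv.refl A).prodCongr e) ((Equiv.refl A).prodCongr e) :=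
  rfl

lemma margBE_submatrix_relabelE [Fintype A] (R : Matrix (A × B × E) (A × B × E) ℂ) (e : F ≃ E) :
    margBE (R.submatrix (relabelE A B e) (relabelE A B e))
      = (margBE R).submatrix ((Equiv.refl B).prodCongr e) ((Equiv.refl B).prodCongr e) :=
  rfl

lemma margE_submatrix_relabelE [Fintype A] [Fintype B] (R : Matrix (A × B × E) (A × B × E) ℂ)
    (e : F ≃ E) :
    margE (R.submatrix (relabelE A B e) (relabelE A B e)) = (margE R).submatrix e e :=
  rfl

lemma margAB_submatrix_relabelE [Fintype E] [Fintype F] (R : Matrix (A × B × E) (A × B × E) ℂ)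
    (e : F ≃ E) : margAB (R.submatrix (relabelE A B e) (relabelE A B e)) = margAB R := by
  ext x y
  exact e.sum_comp fun z ↦ R (x.1, x.2, z) (y.1, y.2, z)

end Marginals

section CondMutualInfo

variable {A B E F : Type*} [Fintype A] [Fintype B] [Fintype E] [Fintype F]
  {R : Matrix (A × B × E) (A × B × E) ℂ} {T : Matrix (A × B × F) (A × B × F) ℂ}

-- `condMutualInfo` has as many positive as negative entropy terms, all of matrices of the same
-- trace, so the corrections `trace * negMulLogTwo c` cancel.
lemma condMutualInfo_smul (hR : R.IsHermitian) (c : ℝ) :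
    condMutualInfo ((c : ℂ) • R) = c * condMutualInfo R := by
  simp only [condMutualInfo, margAE_smul, margBE_smul, margE_smul, vonNeumannEntropy_smul hR,
    vonNeumannEntropy_smul (isHermitian_margAE hR), vonNeumannEntropy_smul (isHermitian_margBE hR),
    vonNeumannEntropy_smul (isHermitian_margE hR), trace_margAE, trace_margBE, trace_margE]
  ring

lemma condMutualInfo_directSumE (hR : R.IsHermitian) (hT : T.IsHermitian) :
    condMutualInfo (directSumE R T) = condMutualInfo R + condMutualInfo T := by
  have hAE := isHermitian_margAE hR
  have hAE' := isHermitian_margAE hT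
  have hBE := isHermitian_margBE hR
  have hBE' := isHermitian_margBE hT
  simp only [condMutualInfo, margAE_directSumE, margBE_directSumE, margE_directSumE]
  rw [directSumE, vonNeumannEntropy_submatrix_equiv (hAE.fromBlocks conjTranspose_zero hAE'),
    vonNeumannEntropy_submatrix_equiv (hBE.fromBlocks conjTranspose_zero hBE'),
    vonNeumannEntropy_submatrix_equiv (hR.fromBlocks conjTranspose_zero hT),
    vonNeumannEntropy_fromBlocks_diagonal hAE hAE', vonNeumannEntropy_fromBlocks_diagonal hBE hBE',
    vonNeumannEntropy_fromBlocks_diagonal hR hT,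
    vonNeumannEntropy_fromBlocks_diagonal (isHermitian_margE hR) (isHermitian_margE hT)]
  ring

lemma condMutualInfo_submatrix_relabelE (hR : R.IsHermitian) (e : F ≃ E) :
    condMutualInfo (R.submatrix (relabelE A B e) (relabelE A B e)) = condMutualInfo R := by
  simp only [condMutualInfo, margAE_submatrix_relabelE, margBE_submatrix_relabelE,
    margE_submatrix_relabelE, vonNeumannEntropy_submatrix_equiv hR,
    vonNeumannEntropy_submatrix_equiv (isHermitian_margAE hR),
    vonNeumannEntropy_submatrix_equiv (isHermitian_margBE hR),
    vonNeumannEntropy_submatrix_equiv (isHermitian_margE hR)]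

-- Apply the two bounds on the marginal of `Y ⊗ X` with `Y = A`, once to `A ⊗ (B ⊗ E)` and once to
-- `A ⊗ E`.
lemma neg_le_condMutualInfo (hR : R.PosSemidef) :
    -(2 * (R.trace.re * Real.logb 2 (Fintype.card A))) ≤ condMutualInfo R := by
  have hAE : (margAE R).PosSemidef := posSemidef_ptraceL (hR.submatrix (prodLeftComm B A E))
  have hABE : vonNeumannEntropy R
      ≤ vonNeumannEntropy (margBE R) + R.trace.re * Real.logb 2 (Fintype.card A) :=
    vonNeumannEntropy_le_vonNeumannEntropy_ptraceL_add hR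
  have hE : vonNeumannEntropy (margE R)
      ≤ vonNeumannEntropy (margAE R) + R.trace.re * Real.logb 2 (Fintype.card A) := by
    rw [← trace_margAE]
    exact vonNeumannEntropy_ptraceL_le_vonNeumannEntropy_add hAE
  unfold condMutualInfo
  linarith

end CondMutualInfo

section SquashedEntanglement

lemma IsState.submatrix_equiv {m n : Type*} [Fintype m] [Fintype n] {ρ : Matrix n n ℂ}
    (hρ : IsState ρ) (e : m ≃ n) : IsState (ρ.submatrix e e) :=
  ⟨hρ.1.submatrix e, (trace_submatrix_equiv ρ e).trans hρ.2⟩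

variable {A B E F : Type*} [Fintype A] [Fintype B] [Fintype E] [Fintype F]

lemma isState_directSumE {R : Matrix (A × B × E) (A × B × E) ℂ}
    {T : Matrix (A × B × F) (A × B × F) ℂ} (hR : IsState R) (hT : IsState T) {l : ℝ}
    (hl0 : 0 ≤ l) (hl1 : l ≤ 1) :
    IsState (directSumE ((l : ℂ) • R) (((1 - l : ℝ) : ℂ) • T)) := by
  refine IsState.submatrix_equiv ⟨posSemidef_fromBlocks_diagonal
    (hR.1.smul (Complex.zero_le_real.2 hl0))
    (hT.1.smul (Complex.zero_le_real.2 (sub_nonneg.2 hl1))), ?_⟩ _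
  rw [trace_fromBlocks, trace_smul, trace_smul, hR.2, hT.2]
  simp

lemma Esq_margAB_le {R : Matrix (A × B × E) (A × B × E) ℂ} (hR : IsState R) :
    Esq (margAB R) ≤ 1 / 2 * condMutualInfo R := by
  let e := (Fintype.equivFin E).symm
  refine csInf_le ⟨-Real.logb 2 (Fintype.card A), ?_⟩
    ⟨Fintype.card E, R.submatrix (relabelE A B e) (relabelE A B e), hR.submatrix_equiv _,
      margAB_submatrix_relabelE R e, ?_⟩
  · rintro _ ⟨d, S, hS, -, rfl⟩
    have h := neg_le_condMutualInfo hS.1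
    rw [hS.2, Complex.one_re] at h
    linarith
  · rw [condMutualInfo_submatrix_relabelE hR.1.isHermitian]

lemma exists_extension_lt {ρ : Matrix (A × B) (A × B) ℂ} (hρ : IsState ρ) {ε : ℝ} (hε : 0 < ε) :
    ∃ (d : ℕ) (R : Matrix (A × B × Fin d) (A × B × Fin d) ℂ),
      IsState R ∧ margAB R = ρ ∧ 1 / 2 * condMutualInfo R < Esq ρ + ε := by
  let e : A × B × Fin 1 ≃ A × B :=
    (Equiv.prodAssoc A B (Fin 1)).symm.trans (Equiv.prodUnique (A × B) (Fin 1))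
  have htrivial : margAB (ρ.submatrix e e) = ρ := by
    ext
    simp [margAB, e]
  obtain ⟨_, ⟨d, R, hR, hRρ, rfl⟩, hlt⟩ := exists_lt_of_csInf_lt
    (by exact ⟨_, 1, ρ.submatrix e e, hρ.submatrix_equiv e, htrivial, rfl⟩)
    (lt_add_of_pos_right (Esq ρ) hε)
  exact ⟨d, R, hR, hRρ, hlt⟩

end SquashedEntanglement

/-- Squashed entanglement is convex. -/
theorem squashedEntanglement_convex
    {A B : Type*} [Fintype A] [Fintype B]
    (ρ σ : Matrix (A × B) (A × B) ℂ) (hρ : IsState ρ) (hσ : IsState σ)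
    (l : ℝ) (hl0 : 0 ≤ l) (hl1 : l ≤ 1) :
    Esq ((l : ℂ) • ρ + ((1 - l : ℝ) : ℂ) • σ) ≤ l * Esq ρ + (1 - l) * Esq σ := by
  refine le_of_forall_pos_le_add fun ε hε ↦ ?_
  obtain ⟨d, R, hR, hRρ, hRε⟩ := exists_extension_lt hρ hε
  obtain ⟨d', T, hT, hTσ, hTε⟩ := exists_extension_lt hσ hε
  calc Esq ((l : ℂ) • ρ + ((1 - l : ℝ) : ℂ) • σ)
      = Esq (margAB (directSumE ((l : ℂ) • R) (((1 - l : ℝ) : ℂ) • T))) := by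
        rw [margAB_directSumE, margAB_smul, margAB_smul, hRρ, hTσ]
    _ ≤ 1 / 2 * condMutualInfo (directSumE ((l : ℂ) • R) (((1 - l : ℝ) : ℂ) • T)) :=
        Esq_margAB_le (isState_directSumE hR hT hl0 hl1)
    _ = l * (1 / 2 * condMutualInfo R) + (1 - l) * (1 / 2 * condMutualInfo T) := by
        rw [condMutualInfo_directSumE (isHermitian_ofReal_smul hR.1.isHermitian l)
          (isHermitian_ofReal_smul hT.1.isHermitian (1 - l)),
          condMutualInfo_smul hR.1.isHermitian, condMutualInfo_smul hT.1.isHermitian]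
        ring
    _ ≤ l * (Esq ρ + ε) + (1 - l) * (Esq σ + ε) := by gcongr
    _ = l * Esq ρ + (1 - l) * Esq σ + ε := by ring

end
end
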